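/- Let (J_n) be a sequence of finite Jacobi matrices with entries a_{i,n} (diagonal) and b_{i,n} > 0 (off-diagonal) such that for every fixed k ≥ 1, b_{n-k-1,n}/b_{n-1,n} → 1 and (a_{n-k,n} - a_{n,n})/b_{n-1,n} → 0 as n → ∞. Let μ_n be the spectral measure of J_n at the last coordinate vector δ_n. Then the rescaled measures μ̃_n(B) = μ_n(b_{n-1,n} B + a_{n,n}) converge weakly to the semicircle measure ρ_sc on [-2,2]. -/

import Mathlib

open Filter MeasureTheory

/-!
The polynomials `S m`, with `S m (2 cos θ) = sin ((m + 1) θ) / sin θ`, are orthonormal for the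
semicircle law and span all polynomials. Let `M n` be the Jacobi matrix recentred and rescaled. Near
its lower-right corner it approaches the free Jacobi matrix (zero diagonal, ones next to it), and
the recurrence `S (m + 2) = X * S (m + 1) - S m` shows that `S m (M n)` applied to the last basis
vector approaches the basis vector `m` steps before it (`tendsto_aeval_S`). Hence the corner entry
of `S m (M n)` tends to `0` for `m > 0` and is `1` for `m = 0`, which are the integrals of `S m`
against the semicircle density (`integral_S_mul_scDensity`). By linearity all moments of the
rescaled spectral measures converge to those of the semicircle law.

Weak convergence then follows from Weierstrass approximation on `[-3, 3]`; outside that interval the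
error is controlled by moments of high order (`tendsto_integral_of_moments`).

The hypothesis on `μ n` is an identity of Bochner integrals, so finiteness of the moments has to be
derived from it: a corner entry of an even power of the matrix is a sum of squares and is nonzero,
whereas the integral of a nonintegrable function is `0` (`integrable_pow_of_moments`).
-/

/-- An `n × n` real Jacobi matrix with diagonal `a` and off-diagonal `b`. -/
def jacobiMatrix (n : ℕ) (a b : ℕ → ℝ) : Matrix (Fin n) (Fin n) ℝ :=
  fun i j =>
    if (i : ℕ) = j then a i
    else if (i : ℕ) + 1 = j then b i
    else if (j : ℕ) + 1 = i then b j
    else 0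

/-! ### Chebyshev polynomials and the semicircle density -/

open Polynomial in
lemma sin_mul_eval_S (m : ℕ) (θ : ℝ) :
    Real.sin θ * (Chebyshev.S ℝ (m : ℤ)).eval (2 * Real.cos θ) = Real.sin ((m + 1 : ℕ) * θ) := by
  induction m using Nat.twoStepInduction with
  | zero => simp
  | one =>
    have := Real.sin_two_mul θ
    push_cast
    simp only [Chebyshev.S_one, eval_X]
    rw [this]; ring
  | more m ih0 ih1 =>
    push_cast at ih0 ih1 ⊢
    rw [Chebyshev.S_add_two]
    simp only [eval_sub, eval_mul, eval_X]
    have e1 : ((m : ℝ) + 2 + 1) * θ = (m + 1 + 1) * θ + θ := by ring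
    have e0 : ((m : ℝ) + 1) * θ = (m + 1 + 1) * θ - θ := by ring
    rw [e1, Real.sin_add]
    rw [e0, Real.sin_sub] at ih0
    linear_combination 2 * Real.cos θ * ih1 - ih0

lemma integral_cos_nat_mul (k : ℕ) :
    ∫ θ in (0 : ℝ)..Real.pi, Real.cos (k * θ) = if k = 0 then Real.pi else 0 := by
  split_ifs with h
  · simp [h]
  · have hk : (k : ℝ) ≠ 0 := by exact_mod_cast h
    rw [intervalIntegral.integral_comp_mul_left (fun x => Real.cos x) hk]
    simp

/-- The density of the semicircle law on `[-2, 2]`. -/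
noncomputable def scDensity (x : ℝ) : ℝ := 1 / (2 * Real.pi) * Real.sqrt (4 - x ^ 2)

lemma continuous_scDensity : Continuous scDensity := by
  unfold scDensity; fun_prop

lemma scDensity_nonneg (x : ℝ) : 0 ≤ scDensity x := by
  unfold scDensity; positivity

/-- The substitution `x = 2 cos θ`. -/
lemma integral_mul_scDensity {g : ℝ → ℝ} (hg : Continuous g) :
    ∫ x in (-2 : ℝ)..2, g x * scDensity x =
      2 / Real.pi * ∫ θ in (0 : ℝ)..Real.pi, g (2 * Real.cos θ) * Real.sin θ ^ 2 := by
  have h := intervalIntegral.integral_comp_mul_deriv (a := Real.pi) (b := 0)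
    (f := fun θ => 2 * Real.cos θ) (f' := fun θ => 2 * -Real.sin θ)
    (g := fun x => g x * scDensity x)
    (fun x _ => (Real.hasDerivAt_cos x).const_mul 2) (by fun_prop)
    (hg.mul continuous_scDensity)
  simp only [Real.cos_pi, Real.cos_zero, mul_neg, mul_one] at h
  rw [← h, intervalIntegral.integral_symm, ← intervalIntegral.integral_neg,
    ← intervalIntegral.integral_const_mul]
  refine intervalIntegral.integral_congr fun θ hθ => ?_
  rw [Set.uIcc_of_le Real.pi_pos.le] at hθ
  have hs := Real.sin_nonneg_of_mem_Icc hθ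
  have hsq : Real.sqrt (4 - (2 * Real.cos θ) ^ 2) = 2 * Real.sin θ := by
    rw [show 4 - (2 * Real.cos θ) ^ 2 = (2 * Real.sin θ) ^ 2 by
      have := Real.sin_sq_add_cos_sq θ
      linear_combination (-4) * this]
    exact Real.sqrt_sq (by positivity)
  simp only [Function.comp, scDensity, hsq]
  field_simp

open Polynomial in
lemma integral_S_mul_scDensity (m : ℕ) :
    ∫ x in (-2 : ℝ)..2, (Chebyshev.S ℝ (m : ℤ)).eval x * scDensity x = if m = 0 then 1 else 0 := by
  rw [integral_mul_scDensity (Polynomial.continuous _)]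
  have h : ∀ θ : ℝ, (Chebyshev.S ℝ (m : ℤ)).eval (2 * Real.cos θ) * Real.sin θ ^ 2 =
      1 / 2 * (Real.cos (m * θ) - Real.cos ((m + 2 : ℕ) * θ)) := by
    intro θ
    have h1 := sin_mul_eval_S m θ
    push_cast at h1 ⊢
    have e1 : (m : ℝ) * θ = (m + 1) * θ - θ := by ring
    have e2 : ((m : ℝ) + 2) * θ = (m + 1) * θ + θ := by ring
    rw [e1, e2, Real.cos_add, Real.cos_sub]
    linear_combination Real.sin θ * h1
  simp only [h]
  rw [intervalIntegral.integral_const_mul, intervalIntegral.integral_sub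
    (Continuous.intervalIntegrable (by fun_prop) _ _)
    (Continuous.intervalIntegrable (by fun_prop) _ _), integral_cos_nat_mul, integral_cos_nat_mul]
  have := Real.pi_ne_zero
  by_cases hm : m = 0
  · simp [hm]; field_simp
  · simp [hm]

open Polynomial in
/-- The polynomials `S m` span `ℝ[X]`, since multiplication by `X` preserves their span. -/
lemma mem_of_forall_S_mem (V : Submodule ℝ ℝ[X]) (hV : ∀ m : ℕ, Chebyshev.S ℝ (m : ℤ) ∈ V)
    (p : ℝ[X]) : p ∈ V := by
  have key : ∀ k m : ℕ, X ^ k * Chebyshev.S ℝ (m : ℤ) ∈ V := by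
    intro k
    induction k with
    | zero => simpa using hV
    | succ k ih =>
      intro m
      have e : X ^ (k + 1) * Chebyshev.S ℝ (m : ℤ) =
          X ^ k * Chebyshev.S ℝ ((m : ℤ) + 1) + X ^ k * Chebyshev.S ℝ ((m : ℤ) - 1) := by
        rw [Chebyshev.S_add_one]; ring
      rw [e]
      refine V.add_mem (by exact_mod_cast ih (m + 1)) ?_
      cases m with
      | zero => simp
      | succ m => simpa using ih m
  induction p using Polynomial.induction_on' with
  | add p q hp hq => exact V.add_mem hp hq
  | monomial n a =>
    rw [← C_mul_X_pow_eq_monomial, ← smul_eq_C_mul]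
    exact V.smul_mem _ (by simpa using key n 0)

/-! ### The method of moments -/

open Polynomial in
/-- A polynomial is dominated outside `[-3, 3]` by every sufficiently high even power of `x / 3`. -/
lemma exists_abs_eval_le (p : ℝ[X]) : ∃ C : ℝ, 0 ≤ C ∧ ∃ d : ℕ, ∀ N ≥ d, ∀ x : ℝ, 3 ≤ |x| →
    |p.eval x| ≤ C * (x / 3) ^ (2 * N) := by
  refine ⟨∑ i ∈ Finset.range (p.natDegree + 1), |p.coeff i| * 3 ^ i, by positivity,
    p.natDegree, fun N hN x hx => ?_⟩
  rw [eval_eq_sum_range, Finset.sum_mul]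
  refine (Finset.abs_sum_le_sum_abs _ _).trans (Finset.sum_le_sum fun i hi => ?_)
  rw [Finset.mem_range] at hi
  have h1 : 1 ≤ |x| / 3 := by linarith
  have h2 : (x / 3) ^ (2 * N) = (|x| / 3) ^ (2 * N) := by
    rw [pow_mul, pow_mul, div_pow x, div_pow |x|, sq_abs]
  rw [h2, abs_mul, abs_pow, mul_assoc]
  refine mul_le_mul_of_nonneg_left ?_ (abs_nonneg _)
  calc |x| ^ i = 3 ^ i * (|x| / 3) ^ i := by rw [← mul_pow]; congr 1; ring
    _ ≤ 3 ^ i * (|x| / 3) ^ (2 * N) := by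
      gcongr
      omega

open Polynomial in
/-- The method of moments for the semicircle law. No tightness is assumed: the mass far away is
controlled by the moments of high order, because the limit lives on `[-2, 2]`. -/
lemma tendsto_integral_of_moments (ν : ℕ → Measure ℝ) (hν : ∀ n, IsProbabilityMeasure (ν n))
    (hint : ∀ n (p : ℝ[X]), Integrable (fun x => p.eval x) (ν n))
    (hmom : ∀ p : ℝ[X], Tendsto (fun n => ∫ x, p.eval x ∂(ν n)) atTop
      (nhds (∫ x in (-2 : ℝ)..2, p.eval x * scDensity x)))
    (f : BoundedContinuousFunction ℝ ℝ) :
    Tendsto (fun n => ∫ x, f x ∂(ν n)) atTop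
      (nhds (∫ x in (-2 : ℝ)..2, f x * scDensity x)) := by
  have hw1 : ∫ x in (-2 : ℝ)..2, scDensity x = 1 := by
    simpa using integral_S_mul_scDensity 0
  have hii : ∀ g : ℝ → ℝ, Continuous g → IntervalIntegrable (fun x => g x * scDensity x)
      volume (-2) 2 := fun g hg => (hg.mul continuous_scDensity).intervalIntegrable _ _
  rw [Metric.tendsto_atTop]
  intro ε hε
  obtain ⟨p, hp⟩ := exists_polynomial_near_of_continuousOn (-3) 3 f f.continuous.continuousOn
    (ε / 5) (by positivity)
  obtain ⟨C, hC, d, hpC⟩ := exists_abs_eval_le p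
  set K : ℝ := ‖f‖ + C with hK
  have hK0 : 0 ≤ K := by positivity
  -- beyond `[-3, 3]` both `f` and `p` are at most a constant times `(x / 3) ^ (2 * N)`
  have hbound : ∀ N ≥ d, ∀ x : ℝ, |f x - p.eval x| ≤ ε / 5 + K * (x / 3) ^ (2 * N) := by
    intro N hN x
    have hpos : 0 ≤ (x / 3) ^ (2 * N) := by rw [pow_mul]; positivity
    rcases le_total |x| 3 with hx | hx
    · have := hp x (abs_le.mp hx)
      rw [abs_sub_comm] at this
      have : 0 ≤ K * (x / 3) ^ (2 * N) := by positivity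
      linarith
    · have h1 := hpC N hN x hx
      have h2 : |f x| ≤ ‖f‖ := f.norm_coe_le_norm x
      have h3 : 1 ≤ (x / 3) ^ (2 * N) := by
        rw [pow_mul]
        refine one_le_pow₀ ?_
        rw [div_pow, ← sq_abs]; nlinarith
      have h4 := abs_sub (f x) (p.eval x)
      have h5 : ‖f‖ * 1 ≤ ‖f‖ * (x / 3) ^ (2 * N) :=
        mul_le_mul_of_nonneg_left h3 (norm_nonneg _)
      rw [hK, add_mul]
      linarith
  have hgeo : Tendsto (fun N : ℕ => K * (4 / 9 : ℝ) ^ N) atTop (nhds 0) := by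
    simpa using (tendsto_pow_atTop_nhds_zero_of_lt_one (by norm_num : (0 : ℝ) ≤ 4 / 9)
      (by norm_num)).const_mul K
  obtain ⟨N, hNd, hN⟩ := ((eventually_ge_atTop d).and
    (hgeo.eventually (gt_mem_nhds (show (0 : ℝ) < ε / 5 by positivity)))).exists
  -- the dominating function is itself a polynomial, so its integrals converge
  set q : ℝ[X] := Polynomial.C (ε / 5) + Polynomial.C K * (Polynomial.C (1 / 3) * X) ^ (2 * N) with hq
  have hqe : ∀ x, q.eval x = ε / 5 + K * (x / 3) ^ (2 * N) := by
    intro x; simp [hq, div_eq_inv_mul]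
  have hle : ∀ x, |f x - p.eval x| ≤ q.eval x := fun x => (hqe x).symm ▸ hbound N hNd x
  have hqlim : ∫ x in (-2 : ℝ)..2, q.eval x * scDensity x < 2 * ε / 5 := by
    have : ∫ x in (-2 : ℝ)..2, q.eval x * scDensity x ≤
        ∫ x in (-2 : ℝ)..2, (ε / 5 + K * (4 / 9) ^ N) * scDensity x := by
      refine intervalIntegral.integral_mono_on (by norm_num) (hii _ q.continuous)
        (hii _ continuous_const) fun x hx => ?_
      refine mul_le_mul_of_nonneg_right ?_ (scDensity_nonneg x)
      rw [hqe, pow_mul]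
      have : (x / 3) ^ 2 ≤ 4 / 9 := by nlinarith [hx.1, hx.2]
      gcongr
    rw [intervalIntegral.integral_const_mul, hw1] at this
    linarith
  have hdiff : |∫ x in (-2 : ℝ)..2, f x * scDensity x - p.eval x * scDensity x| < 2 * ε / 5 := by
    refine lt_of_le_of_lt ?_ hqlim
    refine (intervalIntegral.abs_integral_le_integral_abs (by norm_num)).trans ?_
    refine intervalIntegral.integral_mono_on (by norm_num)
      ((hii f f.continuous).sub (hii _ p.continuous)).abs (hii _ q.continuous) fun x _ => ?_
    rw [← sub_mul, abs_mul, abs_of_nonneg (scDensity_nonneg x)]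
    exact mul_le_mul_of_nonneg_right (hle x) (scDensity_nonneg x)
  rw [intervalIntegral.integral_sub (hii f f.continuous) (hii _ p.continuous)] at hdiff
  have ev1 := (hmom q).eventually (gt_mem_nhds hqlim)
  have ev2 := Metric.tendsto_atTop.mp (hmom p) (ε / 5) (by positivity)
  obtain ⟨n2, hn2⟩ := ev2
  obtain ⟨n1, hn1⟩ := eventually_atTop.mp ev1
  refine ⟨max n1 n2, fun n hn => ?_⟩
  have h1 := hn1 n (le_of_max_le_left hn)
  have h2 := hn2 n (le_of_max_le_right hn)
  have := hν n
  have hf : Integrable (fun x => f x) (ν n) := f.integrable (ν n)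
  have h3 : |∫ x, (f x - p.eval x) ∂(ν n)| ≤ ∫ x, q.eval x ∂(ν n) :=
    (abs_integral_le_integral_abs).trans
      (integral_mono (hf.sub (hint n p)).abs (hint n q) hle)
  rw [integral_sub hf (hint n p)] at h3
  rw [Real.dist_eq, abs_lt] at h2 ⊢
  rw [abs_lt] at hdiff
  rw [abs_le] at h3
  constructor <;> linarith [h2.1, h2.2, hdiff.1, hdiff.2, h3.1, h3.2]

/-! ### Moments of the spectral measures -/

lemma jacobiMatrix_symm (n : ℕ) (a b : ℕ → ℝ) (i j : Fin n) :
    jacobiMatrix n a b i j = jacobiMatrix n a b j i := by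
  unfold jacobiMatrix
  grind

lemma jacobiMatrix_pow_symm (n : ℕ) (a b : ℕ → ℝ) (k : ℕ) (i j : Fin n) :
    (jacobiMatrix n a b ^ k) i j = (jacobiMatrix n a b ^ k) j i := by
  have h : (jacobiMatrix n a b).IsSymm := Matrix.IsSymm.ext fun i j => jacobiMatrix_symm n a b j i
  exact ((h.pow k).apply i j).symm

/-- Positivity at exponents `2 ^ (r + 1)`: by symmetry the corner entry of `J ^ (2 * m)` is a sum
of squares over the last row of `J ^ m`. -/
lemma jacobiMatrix_pow_last_pos (n : ℕ) (a b : ℕ → ℝ) (hb : ∀ i, 0 < b i) (r : ℕ) :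
    0 < (jacobiMatrix (n + 2) a b ^ 2 ^ (r + 1)) (Fin.last (n + 1)) (Fin.last (n + 1)) := by
  have key : ∀ m (i : Fin (n + 2)), (jacobiMatrix (n + 2) a b ^ m) (Fin.last (n + 1)) i ≠ 0 →
      0 < (jacobiMatrix (n + 2) a b ^ (m * 2)) (Fin.last (n + 1)) (Fin.last (n + 1)) := by
    intro m i hi
    rw [pow_mul, pow_two, Matrix.mul_apply]
    refine Finset.sum_pos' (fun j _ => ?_) ⟨i, Finset.mem_univ _, ?_⟩
    · rw [jacobiMatrix_pow_symm _ _ _ _ j]; exact mul_self_nonneg _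
    · rw [jacobiMatrix_pow_symm _ _ _ _ i]; exact mul_self_pos.mpr hi
  induction r with
  | zero =>
    refine key 1 (Fin.castSucc (Fin.last n)) ?_
    have h : ¬ n + 1 + 1 = n := by omega
    simpa [jacobiMatrix, h] using (hb n).ne'
  | succ r ih =>
    rw [pow_succ 2 (r + 1)]
    exact key _ _ ih.ne'

/-- A nonzero Bochner integral forces integrability, so the moment identity at the exponents
`2 ^ (r + 1)` yields all moments. -/
lemma integrable_pow_of_moments (n : ℕ) (a b : ℕ → ℝ) (hb : ∀ i, 0 < b i)
    (μ : Measure ℝ) [IsProbabilityMeasure μ]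
    (hmom : ∀ k, ∫ x, x ^ k ∂μ =
      (jacobiMatrix (n + 2) a b ^ k) (Fin.last (n + 1)) (Fin.last (n + 1))) (k : ℕ) :
    Integrable (fun x : ℝ => x ^ k) μ := by
  have h : Integrable (fun x : ℝ => x ^ 2 ^ (k + 1)) μ := by
    by_contra hcon
    have h1 := jacobiMatrix_pow_last_pos n a b hb k
    rw [← hmom, integral_undef hcon] at h1
    exact lt_irrefl _ h1
  refine ((integrable_const (1 : ℝ)).add h).mono' (by fun_prop) (ae_of_all _ fun x => ?_)
  have hk : k ≤ 2 ^ (k + 1) := (Nat.lt_two_pow_self.trans_le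
    (Nat.pow_le_pow_right (by norm_num) (Nat.le_succ k))).le
  have hpow : x ^ 2 ^ (k + 1) = |x| ^ 2 ^ (k + 1) := by
    rw [pow_succ, pow_mul', pow_mul', sq_abs]
  simp only [Pi.add_apply, norm_pow, Real.norm_eq_abs]
  rw [hpow]
  rcases le_total |x| 1 with hx | hx
  · have := pow_le_one₀ (n := k) (abs_nonneg x) hx
    have : 0 ≤ |x| ^ 2 ^ (k + 1) := by positivity
    linarith
  · have := pow_le_pow_right₀ hx hk
    linarith

open Polynomial in
lemma integrable_eval_of_pow {μ : Measure ℝ} (h : ∀ k : ℕ, Integrable (fun x : ℝ => x ^ k) μ)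
    (p : ℝ[X]) : Integrable (fun x => p.eval x) μ := by
  simp only [eval_eq_sum_range]
  exact integrable_finsetSum _ fun i _ => (h i).const_mul _

open Polynomial in
lemma integral_eval_of_pow {N : ℕ} {J : Matrix (Fin N) (Fin N) ℝ} {l : Fin N} {μ : Measure ℝ}
    (h : ∀ k : ℕ, Integrable (fun x : ℝ => x ^ k) μ)
    (hmom : ∀ k, ∫ x, x ^ k ∂μ = (J ^ k) l l) (p : ℝ[X]) :
    ∫ x, p.eval x ∂μ = (aeval J p) l l := by
  simp only [eval_eq_sum_range]
  rw [integral_finsetSum _ fun i _ => (h i).const_mul _, aeval_eq_sum_range, Matrix.sum_apply]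
  simp [integral_const_mul, hmom]

/-! ### The rescaled matrix near its corner -/

/-- The recentred and rescaled Jacobi matrix `(J - a(n+1)) / b(n)`. -/
noncomputable def rescaledJacobi (n : ℕ) (a b : ℕ → ℝ) : Matrix (Fin (n + 2)) (Fin (n + 2)) ℝ :=
  (1 / b n) • (jacobiMatrix (n + 2) a b - a (n + 1) • 1)

/-- The index at distance `j` from the last one; only meaningful for `j ≤ n + 1`. -/
def fromEnd (n j : ℕ) : Fin (n + 2) := Fin.ofNat (n + 2) (n + 1 - j)

lemma fromEnd_val (n j : ℕ) : (fromEnd n j : ℕ) = n + 1 - j := by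
  simp only [fromEnd, Fin.ofNat]
  exact Nat.mod_eq_of_lt (by omega)

lemma fromEnd_zero (n : ℕ) : fromEnd n 0 = Fin.last (n + 1) := by
  ext; simp [fromEnd_val]

/-- The last row of the matrix has no entry to the right of the diagonal. -/
lemma rescaledJacobi_mul_fromEnd_zero (n : ℕ) (a b : ℕ → ℝ)
    (Q : Matrix (Fin (n + 2)) (Fin (n + 2)) ℝ) (l : Fin (n + 2)) :
    (rescaledJacobi n a b * Q) (fromEnd n 0) l =
      (a (n + 1 - 0) - a (n + 1)) / b n * Q (fromEnd n 0) l +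
        b (n - 0) / b n * Q (fromEnd n 1) l := by
  have h : ∀ t, rescaledJacobi n a b (fromEnd n 0) t =
      (if t = fromEnd n 0 then (a (n + 1 - 0) - a (n + 1)) / b n else 0) +
      (if t = fromEnd n 1 then b (n - 0) / b n else 0) := by
    intro t
    have ht := t.isLt
    simp only [rescaledJacobi, jacobiMatrix, Matrix.smul_apply, Matrix.sub_apply,
      Matrix.one_apply, Fin.ext_iff, fromEnd_val, smul_eq_mul]
    by_cases h1 : (t : ℕ) = n + 1
    · simp [h1]
    · by_cases h2 : (t : ℕ) = n
      · have h3 : ¬ n + 1 + 1 = n := by omega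
        simp [h2, h3, div_eq_inv_mul]
      · grind
  rw [Matrix.mul_apply]
  simp only [h, add_mul, Finset.sum_add_distrib, ite_mul, zero_mul, Finset.sum_ite_eq',
    Finset.mem_univ, if_true]

lemma rescaledJacobi_mul_fromEnd_succ (n j : ℕ) (hj : j + 1 ≤ n) (a b : ℕ → ℝ)
    (Q : Matrix (Fin (n + 2)) (Fin (n + 2)) ℝ) (l : Fin (n + 2)) :
    (rescaledJacobi n a b * Q) (fromEnd n (j + 1)) l =
      (a (n + 1 - (j + 1)) - a (n + 1)) / b n * Q (fromEnd n (j + 1)) l +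
        b (n - (j + 1)) / b n * Q (fromEnd n (j + 2)) l +
        b (n - j) / b n * Q (fromEnd n j) l := by
  have h : ∀ t, rescaledJacobi n a b (fromEnd n (j + 1)) t =
      (if t = fromEnd n (j + 1) then (a (n + 1 - (j + 1)) - a (n + 1)) / b n else 0) +
      (if t = fromEnd n (j + 2) then b (n - (j + 1)) / b n else 0) +
      (if t = fromEnd n j then b (n - j) / b n else 0) := by
    intro t
    have ht := t.isLt
    obtain ⟨m, rfl⟩ : ∃ m, n = m + (j + 1) := ⟨n - (j + 1), by omega⟩
    have e0 : m + (j + 1) + 1 - (j + 1) = m + 1 := by omega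
    have e1 : m + (j + 1) + 1 - (j + 2) = m := by omega
    have e2 : m + (j + 1) + 1 - j = m + 2 := by omega
    have e3 : m + (j + 1) - (j + 1) = m := by omega
    have e4 : m + (j + 1) - j = m + 1 := by omega
    simp only [rescaledJacobi, jacobiMatrix, Matrix.smul_apply, Matrix.sub_apply,
      Matrix.one_apply, Fin.ext_iff, fromEnd_val, smul_eq_mul, e0, e1, e2, e3, e4]
    by_cases h1 : (t : ℕ) = m + 1
    · simp [h1, div_eq_inv_mul]
    · by_cases h2 : (t : ℕ) = m
      · have h3 : ¬ m + 1 + 1 = m := by omega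
        simp [h2, h3, div_eq_inv_mul]
      · by_cases h3 : (t : ℕ) = m + 2
        · simp [h3, div_eq_inv_mul]
        · grind
  rw [Matrix.mul_apply]
  simp [h, add_mul, Finset.sum_add_distrib]

open Polynomial in
/-- In the limit `S m` of the rescaled matrix sends the last basis vector to the one `m` steps
before it, as it does for the free Jacobi matrix. -/
lemma tendsto_aeval_S (A B : ℕ → ℕ → ℝ)
    (hb : ∀ k : ℕ, Tendsto (fun n => B n (n - k) / B n n) atTop (nhds 1))
    (ha : ∀ k : ℕ, Tendsto (fun n => (A n (n + 1 - k) - A n (n + 1)) / B n n) atTop (nhds 0))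
    (m : ℕ) : ∀ j : ℕ, Tendsto (fun n => (aeval (rescaledJacobi n (A n) (B n))
        (Chebyshev.S ℝ (m : ℤ))) (fromEnd n j) (Fin.last (n + 1)))
      atTop (nhds (if j = m then 1 else 0)) := by
  -- one application of the limiting matrix shifts the coordinates both ways
  have step : ∀ (p : ℝ[X]) (u : ℕ → ℝ), (∀ j, Tendsto (fun n =>
      (aeval (rescaledJacobi n (A n) (B n)) p) (fromEnd n j) (Fin.last (n + 1)))
        atTop (nhds (u j))) →
      ∀ j, Tendsto (fun n => (aeval (rescaledJacobi n (A n) (B n)) (X * p))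
        (fromEnd n j) (Fin.last (n + 1))) atTop
        (nhds (u (j + 1) + if j = 0 then 0 else u (j - 1))) := by
    intro p u hu j
    cases j with
    | zero =>
      have := ((ha 0).mul (hu 0)).add ((hb 0).mul (hu 1))
      simp only [map_mul, aeval_X, rescaledJacobi_mul_fromEnd_zero]
      simpa using this
    | succ j =>
      have := (((ha (j + 1)).mul (hu (j + 1))).add ((hb (j + 1)).mul (hu (j + 2)))).add
        ((hb j).mul (hu j))
      simp only [zero_mul, one_mul, zero_add] at this
      simp only [Nat.add_eq_zero_iff, one_ne_zero, and_false, if_false, Nat.add_sub_cancel]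
      refine this.congr' ?_
      filter_upwards [eventually_ge_atTop (j + 1)] with n hn
      rw [map_mul, aeval_X, rescaledJacobi_mul_fromEnd_succ n j hn]
  have base : ∀ j : ℕ, Tendsto (fun n => (aeval (rescaledJacobi n (A n) (B n))
      (1 : ℝ[X])) (fromEnd n j) (Fin.last (n + 1))) atTop (nhds (if j = 0 then 1 else 0)) := by
    intro j
    refine tendsto_const_nhds.congr' ?_
    filter_upwards [eventually_ge_atTop j] with n hn
    simp only [map_one, Matrix.one_apply, Fin.ext_iff, fromEnd_val, Fin.val_last]
    congr 1
    simp only [eq_iff_iff]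
    omega
  induction m using Nat.twoStepInduction with
  | zero => simpa using base
  | one =>
    intro j
    have := step 1 _ base j
    rw [mul_one] at this
    simp only [Nat.cast_one, Chebyshev.S_one]
    convert this using 2
    rcases j with _ | _ | j <;> simp
  | more m ih0 ih1 =>
    intro j
    have := (step _ _ ih1 j).sub (ih0 j)
    push_cast at this ⊢
    rw [Chebyshev.S_add_two]
    simp only [map_sub, Matrix.sub_apply]
    convert this using 2
    rcases j with _ | j
    · simp
    · simp

open Polynomial in
/-- The polynomials with the asserted limit form a subspace, which contains every `S m`. -/
lemma tendsto_aeval_rescaledJacobi (A B : ℕ → ℕ → ℝ)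
    (hb : ∀ k : ℕ, Tendsto (fun n => B n (n - k) / B n n) atTop (nhds 1))
    (ha : ∀ k : ℕ, Tendsto (fun n => (A n (n + 1 - k) - A n (n + 1)) / B n n) atTop (nhds 0))
    (p : ℝ[X]) : Tendsto (fun n => (aeval (rescaledJacobi n (A n) (B n)) p)
        (Fin.last (n + 1)) (Fin.last (n + 1)))
      atTop (nhds (∫ x in (-2 : ℝ)..2, p.eval x * scDensity x)) := by
  have hii : ∀ p : ℝ[X], IntervalIntegrable (fun x => p.eval x * scDensity x)
      volume (-2) 2 := fun p => (p.continuous.mul continuous_scDensity).intervalIntegrable _ _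
  let V : Submodule ℝ ℝ[X] :=
    { carrier := {p | Tendsto (fun n => (aeval (rescaledJacobi n (A n) (B n)) p)
        (Fin.last (n + 1)) (Fin.last (n + 1)))
        atTop (nhds (∫ x in (-2 : ℝ)..2, p.eval x * scDensity x))}
      add_mem' := by
        intro p q hp hq
        simp only [Set.mem_ofPred_eq, eval_add, add_mul, map_add, Matrix.add_apply] at *
        rw [intervalIntegral.integral_add (hii p) (hii q)]
        exact hp.add hq
      zero_mem' := by simp
      smul_mem' := by
        intro c p hp
        simp only [Set.mem_ofPred_eq, eval_smul, smul_eq_mul, mul_assoc, map_smul,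
          Matrix.smul_apply, intervalIntegral.integral_const_mul] at *
        exact hp.const_mul c }
  refine mem_of_forall_S_mem V (fun m => ?_) p
  change Tendsto _ _ _
  rw [integral_S_mul_scDensity]
  simpa [fromEnd_zero, eq_comm] using tendsto_aeval_S A B hb ha m 0

/-! ### Weak convergence -/

/-- For a sequence of finite Jacobi matrices `J_n` (here of size
`n+2`, with diagonal `A n 0, …, A n (n+1)` and positive off-diagonal
`B n 0, …, B n n`) whose coefficients vary regularly near the lower-right corner,
the spectral measures `μ_n` at the last coordinate vector, recentred at
`a_{n,n}` and rescaled by `b_{n-1,n}`, converge weakly to the semicircle law. -/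
theorem jacobi_spectral_measure_semicircle
    (A B : ℕ → ℕ → ℝ) (hB : ∀ n i, 0 < B n i)
    (hb : ∀ k : ℕ, Tendsto (fun n => B n (n - k) / B n n) atTop (nhds 1))
    (ha : ∀ k : ℕ, Tendsto (fun n => (A n (n + 1 - k) - A n (n + 1)) / B n n)
      atTop (nhds 0))
    (μ : ℕ → Measure ℝ) (hprob : ∀ n, IsProbabilityMeasure (μ n))
    (hmom : ∀ n k, ∫ x, x ^ k ∂(μ n) =
      ((jacobiMatrix (n + 2) (A n) (B n)) ^ k) (Fin.last (n + 1)) (Fin.last (n + 1))) :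
    ∀ f : BoundedContinuousFunction ℝ ℝ,
      Tendsto
        (fun n => ∫ x, f x ∂((μ n).map (fun x => (x - A n (n + 1)) / B n n)))
        atTop
        (nhds (∫ x in (-2 : ℝ)..2, f x * (1 / (2 * Real.pi) * Real.sqrt (4 - x ^ 2)))) := by
  intro f
  have hpow : ∀ n k, Integrable (fun x : ℝ => x ^ k) (μ n) := fun n k =>
    have := hprob n
    integrable_pow_of_moments n (A n) (B n) (hB n) (μ n) (hmom n) k
  have hmeas : ∀ n, Measurable (fun x : ℝ => (x - A n (n + 1)) / B n n) := fun n => by fun_prop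
  -- integrals against the rescaled measure become integrals of polynomials against `μ n`
  have hcomp : ∀ n (p : Polynomial ℝ) (x : ℝ), p.eval ((x - A n (n + 1)) / B n n) =
      (p.comp (Polynomial.C (1 / B n n) * (Polynomial.X - Polynomial.C (A n (n + 1))))).eval x := by
    intro n p x
    simp [Polynomial.eval_comp, div_eq_inv_mul]
  refine tendsto_integral_of_moments _
    (fun n => have := hprob n; Measure.isProbabilityMeasure_map (hmeas n).aemeasurable)
    (fun n p => ?_) (fun p => ?_) f
  · rw [integrable_map_measure p.continuous.aestronglyMeasurable (hmeas n).aemeasurable]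
    simp only [Function.comp_def, hcomp]
    exact integrable_eval_of_pow (hpow n) _
  · refine (tendsto_aeval_rescaledJacobi A B hb ha p).congr fun n => ?_
    rw [integral_map (hmeas n).aemeasurable p.continuous.aestronglyMeasurable]
    simp only [hcomp]
    rw [integral_eval_of_pow (hpow n) (hmom n), Polynomial.aeval_comp]
    simp [rescaledJacobi, Algebra.smul_def]
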